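/- arXiv:0811.2595 — 2 statements merged into one kernel-verified Lean document; each statement's English description precedes it below -/
import Mathlib

section
/- Under the connectivity and weight assumptions, the transition matrices Φ(k,s) = A(k)A(k−1)⋯A(s+1) satisfy: (1) lim_{k→∞} Φ(k,s) = (1/m) e eᵀ for every s, where e ∈ ℝ^m is the all-ones vector; and (2) the convergence is geometric with |[Φ(k,s)]_{i,j} − 1/m| ≤ θ β^{k−s} for all i,j and all k ≥ s, where θ = (1 − η/(4m²))^{−2} and β = (1 − η/(4m²))^{1/Q}. -/
open Filter Finset

/-- The transition matrices `Φ(k,s) = A(k) A(k-1) ⋯ A(s+1)` (for `k ≥ s`). -/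
noncomputable def transMat {m : ℕ} (A : ℕ → Matrix (Fin m) (Fin m) ℝ) (k s : ℕ) :
    Matrix (Fin m) (Fin m) ℝ :=
  ((List.range (k - s)).map fun t => A (k - t)).prod

/-!
Fix a column of `transMat A k s` and let `y` be its deviation from `1/m`. A step `y ↦ A y` lowers
the energy `∑ yᵢ²` by `½ ∑ᵢⱼ (AᵀA)ᵢⱼ (yᵢ - yⱼ)²`. Sort the values of `y` at the start of a window of
`Q` steps: each gap between consecutive values separates the agents into two groups, and joint
connectivity forces the two groups to interact within the window. Up to the first interaction the
gap persists, and that interaction costs at least `η/2 · gap²`. As `y` has mean zero, Cauchy–Schwarz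
gives `∑ yᵢ² ≤ m · (∑ gap)² ≤ m² · ∑ gap²`, so over a window the energy contracts by
`1 - η/(2m²) ≤ (1 - η/(4m²))²`.
-/

open Matrix Relation

section Estimates

variable {R : Type*} [Field R] [LinearOrder R] [IsStrictOrderedRing R]

lemma sum_sub_le_of_monotone {X : ℕ → R} (hX : Monotone X) {u v : R} (huv : u ≤ v)
    {E : Finset ℕ} (hE : ∀ d ∈ E, u ≤ X d ∧ X (d + 1) ≤ v) :
    ∑ d ∈ E, (X (d + 1) - X d) ≤ v - u := by
  induction E using Finset.induction_on_max generalizing v with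
  | empty => simpa using huv
  | insert a E hlt ih =>
    obtain ⟨hua, hav⟩ := hE a (mem_insert_self a E)
    have hbelow : ∑ d ∈ E, (X (d + 1) - X d) ≤ X a - u :=
      ih hua fun d hd => ⟨(hE d (mem_insert_of_mem hd)).1, hX (hlt d hd)⟩
    rw [sum_insert fun ha => (hlt a ha).false]
    linarith

lemma sum_sq_sub_le_of_monotone {X : ℕ → R} (hX : Monotone X) {u v : R} (huv : u ≤ v)
    {E : Finset ℕ} (hE : ∀ d ∈ E, u ≤ X d ∧ X (d + 1) ≤ v) :
    ∑ d ∈ E, (X (d + 1) - X d) ^ 2 ≤ (v - u) ^ 2 := by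
  have hgap : ∀ d, 0 ≤ X (d + 1) - X d := fun d => sub_nonneg.2 (hX d.le_succ)
  calc ∑ d ∈ E, (X (d + 1) - X d) ^ 2 ≤ (∑ d ∈ E, (X (d + 1) - X d)) ^ 2 :=
        sum_sq_le_sq_sum_of_nonneg fun d _ => hgap d
    _ ≤ (v - u) ^ 2 :=
        pow_le_pow_left₀ (sum_nonneg fun d _ => hgap d) (sum_sub_le_of_monotone hX huv hE) 2

lemma le_pow_div_mul_of_antitone {V : ℕ → R} (hV : Antitone V) {q : R} (hq : 0 ≤ q) {Q : ℕ}
    (hstep : ∀ k, V (k + Q) ≤ q * V k) (n : ℕ) : V n ≤ q ^ (n / Q) * V 0 := by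
  have hmul : ∀ r, V (Q * r) ≤ q ^ r * V 0 := by
    intro r
    induction r with
    | zero => simp
    | succ r ih =>
      calc V (Q * (r + 1)) ≤ q * V (Q * r) := hstep (Q * r)
        _ ≤ q * (q ^ r * V 0) := mul_le_mul_of_nonneg_left ih hq
        _ = q ^ (r + 1) * V 0 := by ring
  exact (hV (Nat.mul_div_le n Q)).trans (hmul (n / Q))

lemma pow_div_le_inv_mul_rpow_pow {c : ℝ} (hc0 : 0 < c) (hc1 : c ≤ 1) {Q : ℕ} (hQ : 0 < Q)
    (n : ℕ) : c ^ (n / Q) ≤ c⁻¹ * (c ^ ((1 : ℝ) / Q)) ^ n := by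
  have hroot : (c ^ ((1 : ℝ) / Q)) ^ Q = c := by
    rw [one_div, Real.rpow_inv_natCast_pow hc0.le hQ.ne']
  rw [← div_eq_inv_mul, le_div_iff₀ hc0, ← pow_succ]
  calc c ^ (n / Q + 1) = (c ^ ((1 : ℝ) / Q)) ^ (Q * (n / Q + 1)) := by rw [pow_mul, hroot]
    _ ≤ (c ^ ((1 : ℝ) / Q)) ^ n :=
        pow_le_pow_of_le_one (by positivity) (Real.rpow_le_one hc0.le hc1 (by positivity))
          (Nat.lt_mul_div_succ n hQ).le

lemma tendsto_of_abs_sub_le_mul_pow {u : ℕ → ℝ} {a C b : ℝ} {s : ℕ} (hb0 : 0 ≤ b) (hb1 : b < 1)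
    (hu : ∀ k, s ≤ k → |u k - a| ≤ C * b ^ (k - s)) : Tendsto u atTop (nhds a) := by
  have hbound : Tendsto (fun k => C * b ^ (k - s)) atTop (nhds 0) := by
    simpa using ((tendsto_pow_atTop_nhds_zero_of_lt_one hb0 hb1).comp
      (tendsto_sub_atTop_nat s)).const_mul C
  rw [tendsto_iff_dist_tendsto_zero]
  refine squeeze_zero' (Eventually.of_forall fun _ => dist_nonneg) ?_ hbound
  filter_upwards [eventually_ge_atTop s] with k hk using hu k hk

lemma one_sub_div_mul_sq_mem_Ioo {η : R} (hη0 : 0 < η) (hη1 : η ≤ 1) {a : R} (ha : 1 < a) {m : ℕ}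
    (hm : 0 < m) : 1 - η / (a * (m : R) ^ 2) ∈ Set.Ioo 0 1 := by
  have hm1 : (1 : R) ≤ m := Nat.one_le_cast.2 hm
  have hlt : η < a * (m : R) ^ 2 :=
    (hη1.trans_lt ha).trans_le (le_mul_of_one_le_right (by linarith) (one_le_pow₀ hm1))
  exact ⟨sub_pos.2 ((div_lt_one (by positivity)).2 hlt), sub_lt_self 1 (by positivity)⟩

end Estimates

section Energy

variable {R ι : Type*} [Field R] [LinearOrder R] [IsStrictOrderedRing R] [Fintype ι]

lemma sum_sq_le_card_mul_sq_of_sum_eq_zero {y : ι → R} (hy : ∑ i, y i = 0) {a b : R}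
    (hab : ∀ i, a ≤ y i ∧ y i ≤ b) : ∑ i, y i ^ 2 ≤ Fintype.card ι * (b - a) ^ 2 := by
  have hpoint : ∀ i, y i ^ 2 ≤ (a + b) * y i + (b - a) ^ 2 := fun i => by
    nlinarith [mul_nonneg (sub_nonneg.2 (hab i).1) (sub_nonneg.2 (hab i).2), sq_nonneg (a - b),
      sq_nonneg (a + b)]
  calc ∑ i, y i ^ 2 ≤ ∑ i, ((a + b) * y i + (b - a) ^ 2) := sum_le_sum fun i _ => hpoint i
    _ = Fintype.card ι * (b - a) ^ 2 := by simp [sum_add_distrib, ← mul_sum, hy]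

variable [DecidableEq ι]

lemma sum_sq_ite_sub_inv_card_le_one (j : ι) :
    ∑ i, ((if i = j then 1 else 0) - (Fintype.card ι : R)⁻¹) ^ 2 ≤ 1 := by
  have : Nonempty ι := ⟨j⟩
  set c : R := (Fintype.card ι : R)⁻¹ with hc
  have hc0 : 0 ≤ c := by positivity
  have hcard : Fintype.card ι * c ^ 2 = c := by
    rw [hc]; field_simp
  have hexpand : ∀ i, ((if i = j then 1 else 0) - c) ^ 2 =
      (if i = j then 1 - 2 * c else 0) + c ^ 2 := fun i => by split_ifs <;> ring
  calc ∑ i, ((if i = j then 1 else 0) - c) ^ 2 = 1 - 2 * c + Fintype.card ι * c ^ 2 := by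
        simp [hexpand, sum_add_distrib]
    _ ≤ 1 := by linarith

lemma sum_sum_mul_sq_sub_of_mem_doublyStochastic {W : Matrix ι ι R}
    (hW : W ∈ doublyStochastic R ι) (y : ι → R) :
    ∑ i, ∑ j, W i j * (y i - y j) ^ 2 = 2 * (∑ i, y i ^ 2 - y ⬝ᵥ W *ᵥ y) := by
  have hrows : ∑ i, ∑ j, W i j * y i ^ 2 = ∑ i, y i ^ 2 := by
    simp only [← sum_mul, sum_row_of_mem_doublyStochastic hW, one_mul]
  have hcols : ∑ i, ∑ j, W i j * y j ^ 2 = ∑ j, y j ^ 2 := by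
    rw [sum_comm]
    simp only [← sum_mul, sum_col_of_mem_doublyStochastic hW, one_mul]
  have hform : ∑ i, ∑ j, 2 * (y i * (W i j * y j)) = 2 * (y ⬝ᵥ W *ᵥ y) := by
    simp only [dotProduct, mulVec, mul_sum]
  have hexpand : ∀ i j, W i j * (y i - y j) ^ 2 =
      W i j * y i ^ 2 + W i j * y j ^ 2 - 2 * (y i * (W i j * y j)) := fun i j => by ring
  simp only [hexpand, sum_sub_distrib, sum_add_distrib, hrows, hcols, hform]
  ring

lemma transpose_mul_self_mem_doublyStochastic {A : Matrix ι ι R} (hA : A ∈ doublyStochastic R ι) :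
    Aᵀ * A ∈ doublyStochastic R ι :=
  mul_mem (transpose_mem_doublyStochastic_iff.2 hA) hA

lemma sum_sq_sub_sum_sq_mulVec {A : Matrix ι ι R} (hA : A ∈ doublyStochastic R ι) (y : ι → R) :
    ∑ i, y i ^ 2 - ∑ i, (A *ᵥ y) i ^ 2 =
      (∑ i, ∑ j, (Aᵀ * A) i j * (y i - y j) ^ 2) / 2 := by
  have hform : y ⬝ᵥ (Aᵀ * A) *ᵥ y = ∑ i, (A *ᵥ y) i ^ 2 := by
    rw [← mulVec_mulVec, dotProduct_mulVec, vecMul_transpose]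
    simp only [dotProduct, sq]
  rw [sum_sum_mul_sq_sub_of_mem_doublyStochastic (transpose_mul_self_mem_doublyStochastic hA),
    hform]
  ring

lemma sum_sq_mulVec_le {A : Matrix ι ι R} (hA : A ∈ doublyStochastic R ι) (y : ι → R) :
    ∑ i, (A *ᵥ y) i ^ 2 ≤ ∑ i, y i ^ 2 := by
  have hAA := transpose_mul_self_mem_doublyStochastic hA
  have hdrop : 0 ≤ (∑ i, ∑ j, (Aᵀ * A) i j * (y i - y j) ^ 2) / 2 :=
    div_nonneg (sum_nonneg fun i _ => sum_nonneg fun j _ =>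
      mul_nonneg (nonneg_of_mem_doublyStochastic hAA) (sq_nonneg _)) zero_le_two
  rw [← sum_sq_sub_sum_sq_mulVec hA] at hdrop
  exact sub_nonneg.1 hdrop

end Energy

section CutWeight

variable {R ι : Type*} [CommRing R] [Fintype ι] [DecidableEq ι]

/-- The total weight that `W` puts on pairs, in either order, with exactly one member in `S`. -/
def cutWeight (W : Matrix ι ι R) (S : Finset ι) : R :=
  ∑ i, ∑ j, if i ∈ S ↔ j ∉ S then W i j else 0

lemma cutWeight_transpose_mul_self (A : Matrix ι ι R) (S : Finset ι) :
    cutWeight (Aᵀ * A) S = ∑ k, 2 * ((∑ i ∈ S, A k i) * ∑ j ∈ Sᶜ, A k j) := by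
  have hsplit : ∀ k i j, (if i ∈ S ↔ j ∉ S then A k i * A k j else 0) =
      (if i ∈ S then A k i else 0) * (if j ∈ Sᶜ then A k j else 0) +
        (if i ∈ Sᶜ then A k i else 0) * (if j ∈ S then A k j else 0) := fun k i j => by
    by_cases hi : i ∈ S <;> by_cases hj : j ∈ S <;> simp [hi, hj]
  have hentry : ∀ i j, (if i ∈ S ↔ j ∉ S then (Aᵀ * A) i j else 0) =
      ∑ k, if i ∈ S ↔ j ∉ S then A k i * A k j else 0 := fun i j => by
    split_ifs <;> simp [mul_apply]
  simp only [cutWeight, hentry]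
  rw [sum_congr rfl fun i _ => sum_comm, sum_comm]
  refine sum_congr rfl fun k _ => ?_
  simp only [hsplit, sum_add_distrib, ← sum_mul_sum, sum_ite_mem, univ_inter]
  ring

end CutWeight

section Cuts

variable {R ι : Type*} [Field R] [LinearOrder R]

/-- The graph of the positive entries of `A` has an edge, in either direction, between `S` and its
complement. -/
def Crosses (A : Matrix ι ι R) (S : Finset ι) : Prop :=
  ∃ i j, 0 < A i j ∧ (i ∈ S ↔ j ∉ S)

/-- The interval from `a` to `b` is a gap between the values of `y` on `S` and those off `S`. -/
def IsGap (y : ι → R) (S : Finset ι) (a b : R) : Prop :=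
  (∀ i ∈ S, y i ≤ a) ∧ ∀ i ∉ S, b ≤ y i

/-- The union of the graphs of `B 0, …, B (Q - 1)` is strongly connected; a positive entry
`B t v u` is an edge from `u` to `v`. -/
def JointlyConnected (B : ℕ → Matrix ι ι R) (Q : ℕ) : Prop :=
  ∀ i j, ReflTransGen (fun u v => ∃ t < Q, 0 < B t v u) i j

lemma JointlyConnected.exists_crosses {B : ℕ → Matrix ι ι R} {Q : ℕ} (hB : JointlyConnected B Q)
    {S : Finset ι} {i j : ι} (hi : i ∈ S) (hj : j ∉ S) : ∃ t < Q, Crosses (B t) S := by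
  induction hB i j with
  | refl => exact absurd hi hj
  | @tail u v _ hedge ih =>
    by_cases hu : u ∈ S
    · obtain ⟨t, ht, hpos⟩ := hedge
      exact ⟨t, ht, v, u, hpos, by simp [hu, hj]⟩
    · exact ih hu

variable [IsStrictOrderedRing R] [Fintype ι] [DecidableEq ι]

lemma IsGap.mulVec {A : Matrix ι ι R} (hA : A ∈ rowStochastic R ι) {S : Finset ι}
    (hS : ¬ Crosses A S) {y : ι → R} {a b : R} (hy : IsGap y S a b) :
    IsGap (A *ᵥ y) S a b := by
  have hnn : ∀ i j, 0 ≤ A i j := fun i j => nonneg_of_mem_rowStochastic hA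
  have hzero : ∀ i j, (i ∈ S ↔ j ∉ S) → A i j = 0 := fun i j hij =>
    ((hnn i j).eq_or_lt.resolve_right fun hpos => hS ⟨i, j, hpos, hij⟩).symm
  have hconst : ∀ i (r : R), ∑ j, A i j * r = r := fun i r => by
    rw [← sum_mul, sum_row_of_mem_rowStochastic hA, one_mul]
  refine ⟨fun i hi => ?_, fun i hi => ?_⟩
  · rw [← hconst i a]
    refine sum_le_sum fun j _ => ?_
    by_cases hj : j ∈ S
    · exact mul_le_mul_of_nonneg_left (hy.1 j hj) (hnn i j)
    · simp [hzero i j (by simp [hi, hj])]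
  · rw [← hconst i b]
    refine sum_le_sum fun j _ => ?_
    by_cases hj : j ∈ S
    · simp [hzero i j (by simp [hi, hj])]
    · exact mul_le_mul_of_nonneg_left (hy.2 j hj) (hnn i j)

lemma le_cutWeight_transpose_mul_self {A : Matrix ι ι R} (hA : A ∈ rowStochastic R ι) {η : R}
    (hpos : ∀ i j, 0 < A i j → η ≤ A i j) (hdiag : ∀ i, η ≤ A i i) {S : Finset ι}
    (hS : Crosses A S) : η ≤ cutWeight (Aᵀ * A) S := by
  have hnn : ∀ i j, 0 ≤ A i j := fun i j => nonneg_of_mem_rowStochastic hA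
  obtain ⟨k, l, hkl, hcross⟩ := hS
  have hsum : ∑ i ∈ S, A k i + ∑ j ∈ Sᶜ, A k j = 1 := by
    rw [sum_add_sum_compl, sum_row_of_mem_rowStochastic hA]
  have hle : ∀ (T : Finset ι) i, i ∈ T → A k i ≤ ∑ j ∈ T, A k j := fun T i hi =>
    single_le_sum (fun j _ => hnn k j) hi
  have hboth : η ≤ ∑ i ∈ S, A k i ∧ η ≤ ∑ j ∈ Sᶜ, A k j := by
    by_cases hk : k ∈ S
    · exact ⟨(hdiag k).trans (hle S k hk),
        (hpos k l hkl).trans (hle Sᶜ l (mem_compl.2 (hcross.1 hk)))⟩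
    · exact ⟨(hpos k l hkl).trans (hle S l (by tauto)),
        (hdiag k).trans (hle Sᶜ k (mem_compl.2 hk))⟩
  have hS0 : ∀ (T : Finset ι) k, 0 ≤ ∑ i ∈ T, A k i := fun T k => sum_nonneg fun i _ => hnn k i
  calc η ≤ 2 * ((∑ i ∈ S, A k i) * ∑ j ∈ Sᶜ, A k j) := by
        -- The larger of the two sums is at least 1/2.
        rcases le_total (∑ i ∈ S, A k i) (∑ j ∈ Sᶜ, A k j) with h | h <;>
          nlinarith [hS0 S k, hS0 Sᶜ k]
    _ ≤ cutWeight (Aᵀ * A) S := by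
        rw [cutWeight_transpose_mul_self]
        exact single_le_sum (f := fun k => 2 * ((∑ i ∈ S, A k i) * ∑ j ∈ Sᶜ, A k j))
          (fun k _ => mul_nonneg zero_le_two (mul_nonneg (hS0 S k) (hS0 Sᶜ k))) (mem_univ k)

lemma sum_sq_gap_mul_cutWeight_le {W : Matrix ι ι R} (hW : ∀ i j, 0 ≤ W i j) {X : ℕ → R}
    (hX : Monotone X) {D : Finset ℕ} {S : ℕ → Finset ι} {y : ι → R}
    (hgap : ∀ d ∈ D, IsGap y (S d) (X d) (X (d + 1))) :
    ∑ d ∈ D, (X (d + 1) - X d) ^ 2 * cutWeight W (S d) ≤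
      ∑ i, ∑ j, W i j * (y i - y j) ^ 2 := by
  have hpair : ∀ i j,
      ∑ d ∈ D with (i ∈ S d ↔ j ∉ S d), (X (d + 1) - X d) ^ 2 ≤ (y i - y j) ^ 2 := fun i j => by
    rw [← sq_abs, ← max_sub_min_eq_abs']
    refine sum_sq_sub_le_of_monotone hX min_le_max fun d hd => ?_
    obtain ⟨hdD, hsep⟩ := mem_filter.1 hd
    obtain ⟨hlow, hhigh⟩ := hgap d hdD
    by_cases hi : i ∈ S d
    · exact ⟨min_le_of_left_le (hlow i hi), le_max_of_le_right (hhigh j (hsep.1 hi))⟩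
    · exact ⟨min_le_of_right_le (hlow j (by tauto)), le_max_of_le_left (hhigh i hi)⟩
  calc ∑ d ∈ D, (X (d + 1) - X d) ^ 2 * cutWeight W (S d)
      = ∑ i, ∑ j, W i j * ∑ d ∈ D with (i ∈ S d ↔ j ∉ S d), (X (d + 1) - X d) ^ 2 := by
        simp only [cutWeight, mul_sum, sum_filter, mul_ite, mul_zero]
        rw [sum_comm]
        refine sum_congr rfl fun i _ => ?_
        rw [sum_comm]
        simp only [mul_comm]
    _ ≤ ∑ i, ∑ j, W i j * (y i - y j) ^ 2 :=
        sum_le_sum fun i _ => sum_le_sum fun j _ => mul_le_mul_of_nonneg_left (hpair i j) (hW i j)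

end Cuts

section Gaps

variable {α ι : Type*} [LinearOrder α] [Fintype ι] [Nonempty ι]

lemma exists_monotone_enumeration (y : ι → α) :
    ∃ n ≤ Fintype.card ι, ∃ X : ℕ → α, Monotone X ∧ (∀ d < n, X d < X (d + 1)) ∧
      (∀ d, ∃ i, y i = X d) ∧ ∀ i, ∃ d ≤ n, X d = y i := by
  obtain ⟨n, hn⟩ := Nat.exists_eq_succ_of_ne_zero (univ_nonempty.image y).card_ne_zero
  let e := (univ.image y).orderEmbOfFin hn
  refine ⟨n, ?_, fun d => e (Fin.clamp d n), ?_, ?_, ?_, ?_⟩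
  · exact n.le_succ.trans (hn ▸ card_image_le)
  · intro a b hab
    exact e.monotone (Fin.mk_le_mk.2 (min_le_min_right n hab))
  · intro d hd
    refine e.strictMono (Fin.mk_lt_mk.2 ?_)
    omega
  · intro d
    exact mem_image_univ_iff_mem_range.1 ((univ.image y).orderEmbOfFin_mem hn (Fin.clamp d n))
  · intro i
    obtain ⟨r, hr⟩ : y i ∈ Set.range e := by simp [e]
    refine ⟨r, Fin.is_le r, ?_⟩
    rw [← hr]
    exact congrArg e (Fin.ext (min_eq_left (Fin.is_le r)))

lemma exists_gaps (y : ι → α) :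
    ∃ n ≤ Fintype.card ι, ∃ (X : ℕ → α) (S : ℕ → Finset ι), Monotone X ∧
      (∀ i, X 0 ≤ y i ∧ y i ≤ X n) ∧
      ∀ d < n, IsGap y (S d) (X d) (X (d + 1)) ∧ (∃ i, i ∈ S d) ∧ ∃ i, i ∉ S d := by
  obtain ⟨n, hn, X, hX, hlt, hmem, hval⟩ := exists_monotone_enumeration y
  refine ⟨n, hn, X, fun d => {i | y i ≤ X d}, hX, fun i => ?_, fun d hd => ⟨⟨?_, ?_⟩, ?_, ?_⟩⟩
  · obtain ⟨d, hd, hdi⟩ := hval i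
    exact hdi ▸ ⟨hX d.zero_le, hX hd⟩
  · intro i hi
    simpa using hi
  · intro i hi
    obtain ⟨e, -, hei⟩ := hval i
    rw [mem_filter_univ, not_le, ← hei] at hi
    exact hei ▸ hX (hX.reflect_lt hi)
  · obtain ⟨i, hi⟩ := hmem d
    exact ⟨i, by simp [hi]⟩
  · obtain ⟨i, hi⟩ := hmem (d + 1)
    exact ⟨i, by simp [hi, hlt d hd]⟩

end Gaps

section Averaging

variable {R ι : Type*} [Field R] [LinearOrder R] [IsStrictOrderedRing R] [Fintype ι]
  [DecidableEq ι]

/-- Doubly stochastic averaging weights of a network of agents: each agent keeps weight at least `η`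
on itself, and no positive weight is below `η`. -/
structure IsWeightMatrix (η : R) (A : Matrix ι ι R) : Prop where
  mem_doublyStochastic : A ∈ doublyStochastic R ι
  le_of_pos : ∀ i j, 0 < A i j → η ≤ A i j
  le_diag : ∀ i, η ≤ A i i

lemma IsWeightMatrix.mem_rowStochastic {η : R} {A : Matrix ι ι R} (hA : IsWeightMatrix η A) :
    A ∈ rowStochastic R ι :=
  (mem_doublyStochastic_iff_mem_rowStochastic_and_mem_colStochastic.1 hA.mem_doublyStochastic).1

lemma IsWeightMatrix.sum_sq_gap_le {η : R} {A : Matrix ι ι R} (hA : IsWeightMatrix η A)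
    {X : ℕ → R} (hX : Monotone X) {D : Finset ℕ} {S : ℕ → Finset ι} {y : ι → R}
    (hgap : ∀ d ∈ D, IsGap y (S d) (X d) (X (d + 1))) (hcross : ∀ d ∈ D, Crosses A (S d)) :
    η / 2 * ∑ d ∈ D, (X (d + 1) - X d) ^ 2 ≤ ∑ i, y i ^ 2 - ∑ i, (A *ᵥ y) i ^ 2 := by
  have hAA := transpose_mul_self_mem_doublyStochastic hA.mem_doublyStochastic
  have hcut : ∑ d ∈ D, (X (d + 1) - X d) ^ 2 * η ≤ ∑ i, ∑ j, (Aᵀ * A) i j * (y i - y j) ^ 2 :=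
    calc ∑ d ∈ D, (X (d + 1) - X d) ^ 2 * η
        ≤ ∑ d ∈ D, (X (d + 1) - X d) ^ 2 * cutWeight (Aᵀ * A) (S d) :=
          sum_le_sum fun d hd => mul_le_mul_of_nonneg_left (le_cutWeight_transpose_mul_self
            hA.mem_rowStochastic hA.le_of_pos hA.le_diag (hcross d hd)) (sq_nonneg _)
      _ ≤ ∑ i, ∑ j, (Aᵀ * A) i j * (y i - y j) ^ 2 :=
          sum_sq_gap_mul_cutWeight_le (fun _ _ => nonneg_of_mem_doublyStochastic hAA) hX hgap
  rw [sum_sq_sub_sum_sq_mulVec hA.mem_doublyStochastic]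
  rw [← sum_mul] at hcut
  linarith

variable {η : R} {B : ℕ → Matrix ι ι R} {y : ℕ → ι → R} {Q : ℕ}

lemma isGap_of_forall_not_crosses (hB : ∀ t, B t ∈ rowStochastic R ι)
    (hy : ∀ t, y (t + 1) = B t *ᵥ y t) {S : Finset ι} {a b : R} (h0 : IsGap (y 0) S a b) :
    ∀ t, (∀ r < t, ¬ Crosses (B r) S) → IsGap (y t) S a b
  | 0, _ => h0
  | t + 1, hS => hy t ▸ (isGap_of_forall_not_crosses hB hy h0 t fun r hr =>
      hS r (hr.trans t.lt_succ_self)).mulVec (hB t) (hS t t.lt_succ_self)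

-- Each gap is charged to the first time at which its cut is crossed; until then it stays a gap.
lemma sum_sq_gap_le_of_crosses (hB : ∀ t, IsWeightMatrix η (B t))
    (hy : ∀ t, y (t + 1) = B t *ᵥ y t) {X : ℕ → R} (hX : Monotone X) {D : Finset ℕ}
    {S : ℕ → Finset ι} (hgap : ∀ d ∈ D, IsGap (y 0) (S d) (X d) (X (d + 1)))
    (hcross : ∀ d ∈ D, ∃ t < Q, Crosses (B t) (S d)) :
    η / 2 * ∑ d ∈ D, (X (d + 1) - X d) ^ 2 ≤ ∑ i, y 0 i ^ 2 - ∑ i, y Q i ^ 2 := by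
  let firstCrossing : ℕ → ℕ := fun d => sInf {t | Crosses (B t) (S d)}
  have hfirst_lt : ∀ d ∈ D, firstCrossing d ∈ range Q := fun d hd => by
    obtain ⟨t, htQ, ht⟩ := hcross d hd
    exact mem_range.2 ((Nat.sInf_le ht).trans_lt htQ)
  have hstep : ∀ t, η / 2 * ∑ d ∈ D with firstCrossing d = t, (X (d + 1) - X d) ^ 2 ≤
      ∑ i, y t i ^ 2 - ∑ i, y (t + 1) i ^ 2 := fun t => by
    rw [hy t]
    refine (hB t).sum_sq_gap_le (S := S) hX (fun d hd => ?_) fun d hd => ?_ <;>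
      obtain ⟨hdD, rfl⟩ := mem_filter.1 hd
    · exact isGap_of_forall_not_crosses (fun t => (hB t).mem_rowStochastic) hy (hgap d hdD) _
        fun r hr => Nat.notMem_of_lt_sInf hr
    · obtain ⟨t, -, ht⟩ := hcross d hdD
      exact Nat.sInf_mem (s := {t | Crosses (B t) (S d)}) ⟨t, ht⟩
  calc η / 2 * ∑ d ∈ D, (X (d + 1) - X d) ^ 2
      = ∑ t ∈ range Q, η / 2 * ∑ d ∈ D with firstCrossing d = t, (X (d + 1) - X d) ^ 2 := by
        rw [← mul_sum, sum_fiberwise_of_maps_to hfirst_lt]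
    _ ≤ ∑ t ∈ range Q, (∑ i, y t i ^ 2 - ∑ i, y (t + 1) i ^ 2) := sum_le_sum fun t _ => hstep t
    _ = ∑ i, y 0 i ^ 2 - ∑ i, y Q i ^ 2 := sum_range_sub' (fun t => ∑ i, y t i ^ 2) Q

lemma sum_sq_le_of_jointlyConnected [Nonempty ι] (hη : 0 ≤ η) (hB : ∀ t, IsWeightMatrix η (B t))
    (hconn : JointlyConnected B Q) (hy : ∀ t, y (t + 1) = B t *ᵥ y t) (hzero : ∑ i, y 0 i = 0) :
    ∑ i, y Q i ^ 2 ≤ (1 - η / (2 * (Fintype.card ι : R) ^ 2)) * ∑ i, y 0 i ^ 2 := by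
  obtain ⟨n, hn, X, S, hX, hrange, hgap⟩ := exists_gaps (y 0)
  set m : R := (Fintype.card ι : R)
  have hm : m ≠ 0 := Nat.cast_ne_zero.2 Fintype.card_ne_zero
  set G := ∑ d ∈ range n, (X (d + 1) - X d) ^ 2
  have hdrop : η / 2 * G ≤ ∑ i, y 0 i ^ 2 - ∑ i, y Q i ^ 2 := by
    refine sum_sq_gap_le_of_crosses hB hy hX (fun d hd => (hgap d (mem_range.1 hd)).1)
      fun d hd => ?_
    obtain ⟨-, ⟨i, hi⟩, ⟨j, hj⟩⟩ := hgap d (mem_range.1 hd)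
    exact hconn.exists_crosses hi hj
  have hspread : (X n - X 0) ^ 2 ≤ m * G :=
    calc (X n - X 0) ^ 2 = (∑ d ∈ range n, (X (d + 1) - X d)) ^ 2 := by rw [sum_range_sub]
      _ ≤ n * G := by
        simpa using sq_sum_le_card_mul_sum_sq (s := range n) (f := fun d => X (d + 1) - X d)
      _ ≤ m * G := mul_le_mul_of_nonneg_right (Nat.cast_le.2 hn) (sum_nonneg fun _ _ => sq_nonneg _)
  have henergy : ∑ i, y 0 i ^ 2 ≤ m * (m * G) :=
    (sum_sq_le_card_mul_sq_of_sum_eq_zero hzero hrange).trans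
      (mul_le_mul_of_nonneg_left hspread (Nat.cast_nonneg _))
  have hrate : η / (2 * m ^ 2) * ∑ i, y 0 i ^ 2 ≤ η / 2 * G :=
    calc η / (2 * m ^ 2) * ∑ i, y 0 i ^ 2 ≤ η / (2 * m ^ 2) * (m * (m * G)) :=
          mul_le_mul_of_nonneg_left henergy (by positivity)
      _ = η / 2 * G := by field_simp
  linarith

lemma sum_sq_le_pow_mul_of_jointlyConnected [Nonempty ι] (hη0 : 0 < η) (hη1 : η ≤ 1)
    (hB : ∀ t, IsWeightMatrix η (B t)) (hconn : ∀ k, JointlyConnected (fun t => B (k + t)) Q)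
    (hy : ∀ t, y (t + 1) = B t *ᵥ y t) (hzero : ∑ i, y 0 i = 0) (n : ℕ) :
    ∑ i, y n i ^ 2 ≤
      (1 - η / (2 * (Fintype.card ι : R) ^ 2)) ^ (n / Q) * ∑ i, y 0 i ^ 2 := by
  have hanti : Antitone fun t => ∑ i, y t i ^ 2 := antitone_nat_of_succ_le fun t => by
    rw [hy]
    exact sum_sq_mulVec_le (hB t).mem_doublyStochastic (y t)
  have hzero_all : ∀ t, ∑ i, y t i = 0 := fun t => by
    induction t with
    | zero => exact hzero
    | succ t ih => rw [hy, sum_mulVec_of_mem_doublyStochastic (hB t).mem_doublyStochastic, ih]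
  have hrate : 0 ≤ 1 - η / (2 * (Fintype.card ι : R) ^ 2) :=
    (one_sub_div_mul_sq_mem_Ioo hη0 hη1 one_lt_two Fintype.card_pos).1.le
  exact le_pow_div_mul_of_antitone hanti hrate (fun k => sum_sq_le_of_jointlyConnected
    (y := fun t => y (k + t)) hη0.le (fun t => hB (k + t)) (hconn k) (fun t => hy (k + t))
    (hzero_all k)) n

end Averaging

section TransMat

variable {m : ℕ} {A : ℕ → Matrix (Fin m) (Fin m) ℝ}

lemma transMat_self (A : ℕ → Matrix (Fin m) (Fin m) ℝ) (s : ℕ) : transMat A s s = 1 := by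
  simp [transMat]

lemma transMat_succ (A : ℕ → Matrix (Fin m) (Fin m) ℝ) {k s : ℕ} (hsk : s ≤ k) :
    transMat A (k + 1) s = A (k + 1) * transMat A k s := by
  simp only [transMat, Nat.succ_sub hsk, List.range_succ_eq_map, List.map_cons, List.prod_cons,
    List.map_map, Nat.sub_zero, Function.comp_def, Nat.succ_eq_add_one, Nat.add_sub_add_right]

lemma transMat_sub_inv_succ {k s : ℕ} (hA : A (k + 1) ∈ rowStochastic ℝ (Fin m)) (hsk : s ≤ k)
    (j : Fin m) : (fun i => transMat A (k + 1) s i j - (m : ℝ)⁻¹) =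
      A (k + 1) *ᵥ fun i => transMat A k s i j - (m : ℝ)⁻¹ := by
  ext i
  simp only [transMat_succ A hsk, mul_apply, mulVec, dotProduct, mul_sub, sum_sub_distrib,
    ← sum_mul, sum_row_of_mem_rowStochastic hA, one_mul]

lemma abs_transMat_sub_inv_le_pow_div {η : ℝ} (hη0 : 0 < η) (hη1 : η ≤ 1)
    (hA : ∀ k, IsWeightMatrix η (A k)) {Q : ℕ}
    (hconn : ∀ k, JointlyConnected (fun t => A (k + t + 1)) Q) (s n : ℕ) (i j : Fin m) :
    |transMat A (s + n) s i j - (m : ℝ)⁻¹| ≤ (1 - η / (4 * (m : ℝ) ^ 2)) ^ (n / Q) := by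
  have : Nonempty (Fin m) := ⟨j⟩
  have hm : (m : ℝ) ≠ 0 := Nat.cast_ne_zero.2 j.pos.ne'
  let y : ℕ → Fin m → ℝ := fun n i => transMat A (s + n) s i j - (m : ℝ)⁻¹
  have hsum : ∑ i, y 0 i = 0 := by simp [y, transMat_self, one_apply, hm]
  have hinit : ∑ i, y 0 i ^ 2 ≤ 1 := by
    simpa [y, transMat_self, one_apply] using sum_sq_ite_sub_inv_card_le_one j
  have hdecay := sum_sq_le_pow_mul_of_jointlyConnected (y := y) hη0 hη1
    (fun t => hA (s + t + 1)) (fun k => by simpa only [add_assoc] using hconn (s + k))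
    (fun t => transMat_sub_inv_succ (hA _).mem_rowStochastic (Nat.le_add_right s t) j) hsum n
  rw [Fintype.card_fin] at hdecay
  set c := 1 - η / (4 * (m : ℝ) ^ 2) with hc
  have hrate : 1 - η / (2 * (m : ℝ) ^ 2) ≤ c ^ 2 := by
    have : η / (2 * (m : ℝ) ^ 2) = 2 * (1 - c) := by rw [hc]; ring
    nlinarith [sq_nonneg (1 - c)]
  have hrate0 := (one_sub_div_mul_sq_mem_Ioo hη0 hη1 one_lt_two j.pos).1.le
  have hc0 : 0 ≤ c := (one_sub_div_mul_sq_mem_Ioo hη0 hη1 (by norm_num) j.pos).1.le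
  refine abs_le_of_sq_le_sq ?_ (pow_nonneg hc0 _)
  calc y n i ^ 2 ≤ ∑ i, y n i ^ 2 :=
        single_le_sum (f := fun i => y n i ^ 2) (fun _ _ => sq_nonneg _) (mem_univ i)
    _ ≤ (1 - η / (2 * (m : ℝ) ^ 2)) ^ (n / Q) * 1 :=
        hdecay.trans (mul_le_mul_of_nonneg_left hinit (by positivity))
    _ ≤ (c ^ 2) ^ (n / Q) := by rw [mul_one]; gcongr
    _ = (c ^ (n / Q)) ^ 2 := pow_right_comm _ _ _

lemma abs_transMat_sub_inv_le_mul_rpow_pow {η : ℝ} (hη0 : 0 < η) (hη1 : η ≤ 1)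
    (hA : ∀ k, IsWeightMatrix η (A k)) {Q : ℕ} (hQ : 0 < Q)
    (hconn : ∀ k, JointlyConnected (fun t => A (k + t + 1)) Q) {s k : ℕ} (hsk : s ≤ k)
    (i j : Fin m) : |transMat A k s i j - (m : ℝ)⁻¹| ≤ ((1 - η / (4 * (m : ℝ) ^ 2)) ^ 2)⁻¹ *
      ((1 - η / (4 * (m : ℝ) ^ 2)) ^ ((1 : ℝ) / Q)) ^ (k - s) := by
  obtain ⟨n, rfl⟩ := Nat.exists_eq_add_of_le hsk
  obtain ⟨hc0, hc1⟩ := one_sub_div_mul_sq_mem_Ioo hη0 hη1 (a := 4) (by norm_num) j.pos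
  have hdecay := abs_transMat_sub_inv_le_pow_div hη0 hη1 hA hconn s n i j
  rw [Nat.add_sub_cancel_left]
  set c := 1 - η / (4 * (m : ℝ) ^ 2)
  calc |transMat A (s + n) s i j - (m : ℝ)⁻¹| ≤ c ^ (n / Q) := hdecay
    _ ≤ c⁻¹ * (c ^ ((1 : ℝ) / Q)) ^ n := pow_div_le_inv_mul_rpow_pow hc0 hc1.le hQ n
    _ ≤ (c ^ 2)⁻¹ * (c ^ ((1 : ℝ) / Q)) ^ n := by
        gcongr
        exact pow_le_of_le_one hc0.le hc1.le two_ne_zero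

end TransMat

/-- Lemma 3.2 (matrix convergence): under the doubly stochastic weight assumptions and the
`Q`-step strong connectivity assumption, the transition matrices `Φ(k,s)` converge to
`(1/m) e eᵀ` as `k → ∞` for every `s`, and the convergence is geometric:
`|[Φ(k,s)]_{i,j} − 1/m| ≤ θ β^{k−s}` with `θ = (1 − η/(4m²))⁻²` and
`β = (1 − η/(4m²))^{1/Q}`. -/
theorem transMat_convergence {m Q : ℕ} (hm : 0 < m) (hQ : 1 ≤ Q)
    (A : ℕ → Matrix (Fin m) (Fin m) ℝ)
    (hnn : ∀ k i j, 0 ≤ A k i j)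
    (hrow : ∀ k i, ∑ j, A k i j = 1)
    (hcol : ∀ k j, ∑ i, A k i j = 1)
    (η : ℝ) (hη0 : 0 < η) (hη1 : η < 1)
    (hη : ∀ k i j, 0 < A k i j → η ≤ A k i j)
    (hself : ∀ k i, η ≤ A k i i)
    (hconn : ∀ k : ℕ, ∀ i j : Fin m,
      Relation.ReflTransGen (fun u u' => ∃ l, 1 ≤ l ∧ l ≤ Q ∧ 0 < A (k + l) u' u) i j) :
    (∀ s : ℕ, ∀ i j : Fin m,
        Tendsto (fun k => transMat A k s i j) atTop (nhds ((m : ℝ)⁻¹))) ∧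
      (∀ s k : ℕ, s ≤ k → ∀ i j : Fin m,
        |transMat A k s i j - (m : ℝ)⁻¹| ≤
          ((1 - η / (4 * (m : ℝ) ^ 2)) ^ 2)⁻¹ *
            ((1 - η / (4 * (m : ℝ) ^ 2)) ^ ((1 : ℝ) / (Q : ℝ))) ^ (k - s)) := by
  have hA : ∀ k, IsWeightMatrix η (A k) := fun k =>
    ⟨mem_doublyStochastic_iff_sum.2 ⟨hnn k, hrow k, hcol k⟩, hη k, hself k⟩
  have hjoint : ∀ k, JointlyConnected (fun t => A (k + t + 1)) Q := fun k i j =>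
    ReflTransGen.mono (fun _ _ ⟨l, hl1, hlQ, hpos⟩ =>
      ⟨l - 1, by omega, by simpa only [add_assoc, Nat.sub_add_cancel hl1] using hpos⟩)
      i j (hconn k i j)
  have hgeom := fun s k (hsk : s ≤ k) =>
    abs_transMat_sub_inv_le_mul_rpow_pow hη0 hη1.le hA hQ hjoint hsk
  obtain ⟨hc0, hc1⟩ := one_sub_div_mul_sq_mem_Ioo hη0 hη1.le (a := 4) (by norm_num) hm
  exact ⟨fun s i j => tendsto_of_abs_sub_le_mul_pow (Real.rpow_nonneg hc0.le _)
    (Real.rpow_lt_one hc0.le hc1 (by positivity)) fun k hk => hgeom s k hk i j, hgeom⟩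
end

section
/- Under the same assumptions (X nonempty closed convex; connectivity; doubly stochastic weights; ‖∇f_i(x)‖ ≤ C_i on X; E[‖ε_{i,k+1}‖²] ≤ ν̄_i²), if the stepsizes satisfy lim_{k→∞} α_k = 0, then lim_{k→∞} E[‖w_{j,k} − y_k‖] = 0 for all j ∈ V, i.e., the agents asymptotically reach consensus in mean. -/
open Filter Finset MeasureTheory

/-!
The disagreement of the agents is the diameter of the set of their states. A row-stochastic matrix
does not increase it, and one whose entries are all at least `δ` shrinks it by the factor `1 - δ`.
Connectivity and positive self-weights make every product of `card ι * Q` consecutive weight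
matrices entrywise positive, hence bounded below by `η ^ (card ι * Q)`, so the effect of a
perturbation on the disagreement decays at a summable rate `c`. The projected subgradient step is a
perturbation of the averaging step of mean size `O(|α (k + 1)|)`, and the expected disagreement is
therefore dominated by the convolution of the summable sequence `c` with a null sequence.
-/

section Disagreement

variable {ι E : Type*}

/-- The disagreement of the agents' states `x`: the largest distance between two of them. It is
encoded as the diameter of the range of `x`, which is meaningful when that range is bounded. -/
noncomputable def disagreement [PseudoMetricSpace E] (x : ι → E) : ℝ :=
  Metric.diam (Set.range x)

lemma disagreement_nonneg [PseudoMetricSpace E] (x : ι → E) : 0 ≤ disagreement x :=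
  Metric.diam_nonneg

lemma disagreement_le [PseudoMetricSpace E] {x : ι → E} {r : ℝ} (hr : 0 ≤ r)
    (h : ∀ i j, dist (x i) (x j) ≤ r) : disagreement x ≤ r :=
  Metric.diam_le_of_forall_dist_le hr <| by
    rintro _ ⟨i, rfl⟩ _ ⟨j, rfl⟩
    exact h i j

lemma dist_le_disagreement [Finite ι] [PseudoMetricSpace E] (x : ι → E) (i j : ι) :
    dist (x i) (x j) ≤ disagreement x :=
  Metric.dist_le_diam_of_mem (Set.finite_range x).isBounded (Set.mem_range_self i)
    (Set.mem_range_self j)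

variable [SeminormedAddCommGroup E]

lemma disagreement_le_two_mul {x : ι → E} {r : ℝ} (hr : 0 ≤ r) (h : ∀ i, ‖x i‖ ≤ r) :
    disagreement x ≤ 2 * r :=
  disagreement_le (by positivity) fun i j => by
    linarith [dist_le_norm_add_norm (x i) (x j), h i, h j]

lemma disagreement_add_le [Finite ι] (x y : ι → E) :
    disagreement (x + y) ≤ disagreement x + disagreement y :=
  disagreement_le (add_nonneg (disagreement_nonneg x) (disagreement_nonneg y)) fun i j =>
    (dist_add_add_le _ _ _ _).trans
      (add_le_add (dist_le_disagreement x i j) (dist_le_disagreement y i j))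

lemma dist_le_disagreement_of_mem_convexHull [Finite ι] [NormedSpace ℝ E] {x : ι → E} {y z : E}
    (hy : y ∈ convexHull ℝ (Set.range x)) (hz : z ∈ convexHull ℝ (Set.range x)) :
    dist y z ≤ disagreement x :=
  calc dist y z ≤ Metric.diam (convexHull ℝ (Set.range x)) :=
        Metric.dist_le_diam_of_mem (isBounded_convexHull.2 (Set.finite_range x).isBounded) hy hz
    _ = disagreement x := convexHull_diam _

end Disagreement

section RowStochastic

open Matrix
open scoped Matrix.Module

variable {ι E : Type*} [Fintype ι] [SeminormedAddCommGroup E] [NormedSpace ℝ E]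

lemma dist_sum_smul_le_one_sub_mul_disagreement {q : ι → ℝ} (hq : ∀ l, 0 ≤ q l)
    (hq1 : ∑ l, q l = 1) (x : ι → E) (j : ι) :
    dist (x j) (∑ l, q l • x l) ≤ (1 - q j) * disagreement x := by
  classical
  have hsub : x j - ∑ l, q l • x l = ∑ l ∈ univ.erase j, q l • (x j - x l) := by
    rw [sum_erase _ (by simp)]
    simp only [smul_sub, sum_sub_distrib, ← sum_smul, hq1, one_smul]
  calc dist (x j) (∑ l, q l • x l)
      ≤ ∑ l ∈ univ.erase j, ‖q l • (x j - x l)‖ := by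
        rw [dist_eq_norm, hsub]
        exact norm_sum_le _ _
    _ ≤ ∑ l ∈ univ.erase j, q l * disagreement x := by
        refine sum_le_sum fun l _ => ?_
        rw [norm_smul, Real.norm_of_nonneg (hq l), ← dist_eq_norm]
        exact mul_le_mul_of_nonneg_left (dist_le_disagreement x j l) (hq l)
    _ = (1 - q j) * disagreement x := by
        rw [← sum_mul, ← hq1, ← add_sum_erase _ _ (mem_univ j), add_sub_cancel_left]

variable [DecidableEq ι]

lemma disagreement_smul_le_one_sub_mul {A : Matrix ι ι ℝ} (hA : A ∈ rowStochastic ℝ ι) {δ : ℝ}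
    (hδ1 : δ ≤ 1) (hδ : ∀ i j, δ ≤ A i j) (x : ι → E) :
    disagreement (A • x) ≤ (1 - δ) * disagreement x := by
  have hx := disagreement_nonneg x
  refine disagreement_le (mul_nonneg (sub_nonneg.2 hδ1) hx) fun i j => ?_
  have hball : ∀ l, x l ∈ Metric.closedBall ((A • x) j) ((1 - δ) * disagreement x) := fun l =>
    (dist_sum_smul_le_one_sub_mul_disagreement (fun _ => nonneg_of_mem_rowStochastic hA)
      (sum_row_of_mem_rowStochastic hA j) x l).trans <|
      mul_le_mul_of_nonneg_right (sub_le_sub_left (hδ j l) 1) hx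
  exact (convex_closedBall _ _).sum_mem (fun _ _ => nonneg_of_mem_rowStochastic hA)
    (sum_row_of_mem_rowStochastic hA i) fun l _ => hball l

lemma disagreement_smul_le {A : Matrix ι ι ℝ} (hA : A ∈ rowStochastic ℝ ι) (x : ι → E) :
    disagreement (A • x) ≤ disagreement x := by
  simpa using disagreement_smul_le_one_sub_mul hA zero_le_one
    (fun _ _ => nonneg_of_mem_rowStochastic hA) x

end RowStochastic

section TransitionMatrix

open Matrix

variable {ι R : Type*}

/-- The directed communication graph over the time window `k + 1, …, k + Q`: there is an edge from
`j` to `i` when `i` gives positive weight to the state of `j` at some time of the window. -/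
def CommunicatesWithin [Zero R] [LT R] (A : ℕ → Matrix ι ι R) (Q k : ℕ) (j i : ι) : Prop :=
  ∃ l, 1 ≤ l ∧ l ≤ Q ∧ 0 < A (k + l) i j

variable [Fintype ι] [DecidableEq ι]

/-- The transition matrix `A (s + t) * ⋯ * A (s + 1)` carrying the states at time `s` to those at
time `s + t` under the averaging dynamics `x (k + 1) = A (k + 1) • x k`. The second argument counts
steps, so this is the matrix often written `Φ(s + t, s + 1)`. -/
def transitionMatrix [Semiring R] (A : ℕ → Matrix ι ι R) (s : ℕ) : ℕ → Matrix ι ι R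
  | 0 => 1
  | t + 1 => A (s + t + 1) * transitionMatrix A s t

lemma transitionMatrix_one [Semiring R] (A : ℕ → Matrix ι ι R) (s : ℕ) :
    transitionMatrix A s 1 = A (s + 1) :=
  mul_one _

lemma transitionMatrix_add [Semiring R] (A : ℕ → Matrix ι ι R) (s t r : ℕ) :
    transitionMatrix A s (t + r) = transitionMatrix A (s + t) r * transitionMatrix A s t := by
  induction r with
  | zero => exact (one_mul _).symm
  | succ r ih =>
    rw [← add_assoc, transitionMatrix, ih, ← add_assoc s, ← Matrix.mul_assoc, transitionMatrix]

lemma transitionMatrix_mem_rowStochastic [Semiring R] [PartialOrder R] [IsOrderedRing R]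
    {A : ℕ → Matrix ι ι R} (hA : ∀ k, A k ∈ rowStochastic R ι) (s t : ℕ) :
    transitionMatrix A s t ∈ rowStochastic R ι := by
  induction t with
  | zero => exact one_mem _
  | succ t ih => exact mul_mem (hA _) ih

end TransitionMatrix

section Positivity

open Matrix

variable {ι R : Type*} [Fintype ι]

lemma eq_univ_of_forall_ssubset_succ {S : ℕ → Finset ι} (hmono : ∀ q, S q ⊆ S (q + 1))
    (hstrict : ∀ q, S q ≠ univ → S q ≠ S (q + 1)) : S (Fintype.card ι) = univ := by
  have hcard : ∀ q, min (Fintype.card ι) q ≤ #(S q) := by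
    intro q
    induction q with
    | zero => exact min_le_of_right_le (Nat.zero_le _)
    | succ q ih =>
      rcases eq_or_ne (S q) univ with hq | hq
      · exact min_le_of_left_le (card_le_card (hq ▸ hmono q))
      · have := card_lt_card ((hmono q).ssubset_of_ne (hstrict q hq))
        omega
  exact (card_eq_iff_eq_univ _).1
    (le_antisymm (card_le_univ _) (by simpa only [min_self] using hcard (Fintype.card ι)))

variable [Semiring R] [LinearOrder R] [IsStrictOrderedRing R]

lemma matrix_mul_apply_pos {M N : Matrix ι ι R} (hM : ∀ i j, 0 ≤ M i j) (hN : ∀ i j, 0 ≤ N i j)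
    {i l j : ι} (hil : 0 < M i l) (hlj : 0 < N l j) : 0 < (M * N) i j :=
  sum_pos' (fun _ _ => mul_nonneg (hM _ _) (hN _ _)) ⟨l, mem_univ l, mul_pos hil hlj⟩

variable [DecidableEq ι] {A : ℕ → Matrix ι ι R} {Q : ℕ}

lemma transitionMatrix_nonneg (hA : ∀ k i j, 0 ≤ A k i j) (s t : ℕ) (i j : ι) :
    0 ≤ transitionMatrix A s t i j := by
  induction t generalizing i j with
  | zero =>
    rw [transitionMatrix, one_apply]
    positivity
  | succ t ih => exact sum_nonneg fun l _ => mul_nonneg (hA _ _ _) (ih _ _)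

lemma transitionMatrix_add_pos (hA : ∀ k i j, 0 ≤ A k i j) {s t r : ℕ} {i l j : ι}
    (hil : 0 < transitionMatrix A (s + t) r i l) (hlj : 0 < transitionMatrix A s t l j) :
    0 < transitionMatrix A s (t + r) i j := by
  rw [transitionMatrix_add]
  exact matrix_mul_apply_pos (transitionMatrix_nonneg hA _ _) (transitionMatrix_nonneg hA _ _)
    hil hlj

lemma transitionMatrix_self_pos (hA : ∀ k i j, 0 ≤ A k i j) (hdiag : ∀ k i, 0 < A k i i)
    (s t : ℕ) (i : ι) : 0 < transitionMatrix A s t i i := by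
  induction t with
  | zero => simp only [transitionMatrix, one_apply_eq, zero_lt_one]
  | succ t ih => exact matrix_mul_apply_pos (hA _) (transitionMatrix_nonneg hA _ _) (hdiag _ i) ih

lemma CommunicatesWithin.transitionMatrix_pos (hA : ∀ k i j, 0 ≤ A k i j)
    (hdiag : ∀ k i, 0 < A k i i) {s : ℕ} {j i : ι} (h : CommunicatesWithin A Q s j i) :
    0 < transitionMatrix A s Q i j := by
  obtain ⟨l, hl, hlQ, hpos⟩ := h
  obtain ⟨t, rfl⟩ := Nat.exists_eq_add_of_le' hl
  obtain ⟨r, rfl⟩ := Nat.exists_eq_add_of_le hlQ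
  refine transitionMatrix_add_pos hA (transitionMatrix_self_pos hA hdiag _ r i) ?_
  refine transitionMatrix_add_pos hA ?_ (transitionMatrix_self_pos hA hdiag s t j)
  rwa [transitionMatrix_one]

lemma transitionMatrix_card_mul_pos (hA : ∀ k i j, 0 ≤ A k i j) (hdiag : ∀ k i, 0 < A k i i)
    (hconn : ∀ k i j, Relation.ReflTransGen (CommunicatesWithin A Q k) i j) (s : ℕ) (i j : ι) :
    0 < transitionMatrix A s (Fintype.card ι * Q) i j := by
  -- The agents influenced by `j` after `q` windows; by connectivity this set grows until full.
  let S : ℕ → Finset ι := fun q => {u | 0 < transitionMatrix A s (q * Q) u j}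
  have mem_S : ∀ {q u}, u ∈ S q ↔ 0 < transitionMatrix A s (q * Q) u j := by
    simp only [S, mem_filter, mem_univ, true_and, implies_true]
  have hstep : ∀ q u u', u ∈ S q → 0 < transitionMatrix A (s + q * Q) Q u' u → u' ∈ S (q + 1) := by
    intro q u u' hu hpos
    rw [mem_S, Nat.succ_mul]
    exact transitionMatrix_add_pos hA hpos (mem_S.1 hu)
  have hstrict : ∀ q, S q ≠ univ → S q ≠ S (q + 1) := by
    intro q hne heq
    refine hne (eq_univ_of_forall fun u => ?_)
    induction hconn (s + q * Q) j u with
    | refl => exact mem_S.2 (transitionMatrix_self_pos hA hdiag s (q * Q) j)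
    | tail _ hedge ih => exact heq ▸ hstep q _ _ ih (hedge.transitionMatrix_pos hA hdiag)
  have hfull : S (Fintype.card ι) = univ := eq_univ_of_forall_ssubset_succ
    (fun q u hu => hstep q u u hu (transitionMatrix_self_pos hA hdiag _ Q u)) hstrict
  exact mem_S.1 (hfull ▸ mem_univ i)

lemma pow_le_transitionMatrix_of_pos (hA : ∀ k i j, 0 ≤ A k i j) {η : R} (hη : 0 ≤ η)
    (hAη : ∀ k i j, 0 < A k i j → η ≤ A k i j) (s t : ℕ) {i j : ι}
    (h : 0 < transitionMatrix A s t i j) : η ^ t ≤ transitionMatrix A s t i j := by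
  induction t generalizing i with
  | zero =>
    obtain rfl : i = j := by
      by_contra hij
      exact h.ne' (one_apply_ne hij)
    simp only [transitionMatrix, one_apply_eq, pow_zero, le_refl]
  | succ t ih =>
    have hnonneg : ∀ l ∈ univ, 0 ≤ A (s + t + 1) i l * transitionMatrix A s t l j :=
      fun l _ => mul_nonneg (hA _ _ _) (transitionMatrix_nonneg hA _ _ _ _)
    obtain ⟨l, -, hl⟩ := (sum_pos_iff_of_nonneg hnonneg).1 h
    have hil : 0 < A (s + t + 1) i l := pos_of_mul_pos_left hl (transitionMatrix_nonneg hA _ _ _ _)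
    have hlj : 0 < transitionMatrix A s t l j := pos_of_mul_pos_right hl (hA _ _ _)
    calc η ^ (t + 1) = η * η ^ t := pow_succ' η t
      _ ≤ A (s + t + 1) i l * transitionMatrix A s t l j :=
        mul_le_mul (hAη _ _ _ hil) (ih hlj) (pow_nonneg hη t) (hA _ _ _)
      _ ≤ transitionMatrix A s (t + 1) i j := single_le_sum hnonneg (mem_univ l)

end Positivity

section Convolution

lemma summable_pow_div {r : ℝ} (hr0 : 0 ≤ r) (hr1 : r < 1) {B : ℕ} (hB : 0 < B) :
    Summable fun t : ℕ => r ^ (t / B) := by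
  have : NeZero B := ⟨hB.ne'⟩
  have hprod : Summable fun p : ℕ × Fin B => r ^ p.1 * 1 :=
    (summable_geometric_of_lt_one hr0 hr1).mul_of_nonneg
      (Summable.of_finite (f := fun _ : Fin B => (1 : ℝ)))
      (fun q => pow_nonneg hr0 q) (fun _ => zero_le_one)
  simpa only [mul_one, Function.comp_def, Nat.divModEquiv_apply] using
    (Nat.divModEquiv B).summable_iff.2 hprod

lemma tendsto_sum_range_mul_of_summable {c b : ℕ → ℝ} (hc : Summable c)
    (hb : Tendsto b atTop (nhds 0)) :
    Tendsto (fun k => ∑ r ∈ range k, c r * b (k - 1 - r)) atTop (nhds 0) := by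
  obtain ⟨M, hM⟩ := isBounded_iff_forall_norm_le.1 (Metric.isBounded_range_of_tendsto b hb)
  have hbM : ∀ n, ‖b n‖ ≤ M := fun n => hM _ (Set.mem_range_self n)
  let term : ℕ → ℕ → ℝ := fun k r => if r < k then c r * b (k - 1 - r) else 0
  have hsum : ∀ k, ∑' r, term k r = ∑ r ∈ range k, c r * b (k - 1 - r) := fun k => by
    rw [tsum_eq_sum (s := range k) fun r hr => if_neg (mem_range.not.1 hr)]
    exact sum_congr rfl fun r hr => if_pos (mem_range.1 hr)
  have hterm : ∀ r, Tendsto (term · r) atTop (nhds 0) := fun r => by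
    have hshift : Tendsto (fun k => k - 1 - r) atTop atTop :=
      (tendsto_sub_atTop_nat r).comp (tendsto_sub_atTop_nat 1)
    have hlim : Tendsto (fun k => c r * b (k - 1 - r)) atTop (nhds 0) := by
      simpa only [mul_zero, Function.comp_apply] using (hb.comp hshift).const_mul (c r)
    refine hlim.congr' ?_
    filter_upwards [eventually_gt_atTop r] with k hk using (if_pos hk).symm
  have hbound : ∀ k r, ‖term k r‖ ≤ ‖c r‖ * M := fun k r => by
    have hM0 : 0 ≤ M := (norm_nonneg _).trans (hbM 0)
    by_cases hr : r < k
    · simp only [term, if_pos hr, norm_mul]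
      exact mul_le_mul_of_nonneg_left (hbM _) (norm_nonneg _)
    · simp only [term, if_neg hr, norm_zero]
      positivity
  simpa only [hsum, tsum_zero] using tendsto_tsum_of_dominated_convergence
    (hc.norm.mul_right M) hterm (Eventually.of_forall hbound)

lemma tendsto_integral_of_le_convolution {Ω : Type*} [MeasurableSpace Ω] {μ : Measure Ω}
    {f b : ℕ → Ω → ℝ} {N : Ω → ℝ} {c : ℕ → ℝ} (hc : Summable c) (hN : Integrable N μ)
    (hb : ∀ k, Integrable (b k) μ) (hblim : Tendsto (fun k => ∫ ω, b k ω ∂μ) atTop (nhds 0))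
    (hf : ∀ k ω, 0 ≤ f k ω)
    (hle : ∀ k ω, f k ω ≤ c k * N ω + ∑ r ∈ range k, c r * b (k - 1 - r) ω) :
    Tendsto (fun k => ∫ ω, f k ω ∂μ) atTop (nhds 0) := by
  have hconv : ∀ k, Integrable (fun ω => ∑ r ∈ range k, c r * b (k - 1 - r) ω) μ := fun k =>
    integrable_finsetSum _ fun r _ => (hb _).const_mul _
  have hmono : ∀ k, ∫ ω, f k ω ∂μ ≤
      c k * ∫ ω, N ω ∂μ + ∑ r ∈ range k, c r * ∫ ω, b (k - 1 - r) ω ∂μ := fun k =>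
    calc ∫ ω, f k ω ∂μ ≤ ∫ ω, (c k * N ω + ∑ r ∈ range k, c r * b (k - 1 - r) ω) ∂μ :=
          integral_mono_of_nonneg (ae_of_all _ (hf k)) ((hN.const_mul _).add (hconv k))
            (ae_of_all _ (hle k))
      _ = _ := by
          rw [integral_add (hN.const_mul _) (hconv k), integral_const_mul,
            integral_finsetSum _ fun r _ => (hb _).const_mul _]
          simp only [integral_const_mul]
  refine squeeze_zero (fun k => integral_nonneg (hf k)) hmono ?_
  simpa only [zero_mul, add_zero] using
    (hc.tendsto_atTop_zero.mul_const _).add (tendsto_sum_range_mul_of_summable hc hblim)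

end Convolution

section PerturbedConsensus

open Matrix
open scoped Matrix.Module

variable {ι E : Type*} [Fintype ι] [DecidableEq ι] [SeminormedAddCommGroup E] [NormedSpace ℝ E]
  {A : ℕ → Matrix ι ι ℝ}

lemma disagreement_transitionMatrix_mul_smul_le (hA : ∀ k, A k ∈ rowStochastic ℝ ι) {δ : ℝ}
    (hδ1 : δ ≤ 1) {B : ℕ} (hδ : ∀ s i j, δ ≤ transitionMatrix A s B i j) (s q : ℕ) (z : ι → E) :
    disagreement (transitionMatrix A s (q * B) • z) ≤ (1 - δ) ^ q * disagreement z := by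
  induction q with
  | zero =>
    simpa only [pow_zero, one_mul] using
      disagreement_smul_le (transitionMatrix_mem_rowStochastic hA s (0 * B)) z
  | succ q ih =>
    calc disagreement (transitionMatrix A s ((q + 1) * B) • z)
        = disagreement (transitionMatrix A (s + q * B) B • transitionMatrix A s (q * B) • z) := by
          rw [Nat.succ_mul, transitionMatrix_add, mul_smul]
      _ ≤ (1 - δ) * disagreement (transitionMatrix A s (q * B) • z) :=
          disagreement_smul_le_one_sub_mul (transitionMatrix_mem_rowStochastic hA _ B) hδ1 (hδ _) _
      _ ≤ (1 - δ) * ((1 - δ) ^ q * disagreement z) :=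
          mul_le_mul_of_nonneg_left ih (sub_nonneg.2 hδ1)
      _ = (1 - δ) ^ (q + 1) * disagreement z := by ring

lemma disagreement_transitionMatrix_smul_le (hA : ∀ k, A k ∈ rowStochastic ℝ ι) {δ : ℝ}
    (hδ1 : δ ≤ 1) {B : ℕ} (hδ : ∀ s i j, δ ≤ transitionMatrix A s B i j) (s t : ℕ) (z : ι → E) :
    disagreement (transitionMatrix A s t • z) ≤ (1 - δ) ^ (t / B) * disagreement z :=
  calc disagreement (transitionMatrix A s t • z)
      = disagreement (transitionMatrix A (s + t / B * B) (t % B) •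
          transitionMatrix A s (t / B * B) • z) := by
        rw [← mul_smul, ← transitionMatrix_add, Nat.div_add_mod']
    _ ≤ disagreement (transitionMatrix A s (t / B * B) • z) :=
        disagreement_smul_le (transitionMatrix_mem_rowStochastic hA _ _) _
    _ ≤ (1 - δ) ^ (t / B) * disagreement z :=
        disagreement_transitionMatrix_mul_smul_le hA hδ1 hδ s (t / B) z

lemma disagreement_sub_transitionMatrix_smul_le {c : ℕ → ℝ}
    (hc : ∀ s t (z : ι → E), disagreement (transitionMatrix A s t • z) ≤ c t * disagreement z)
    (x : ℕ → ι → E) (s t : ℕ) :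
    disagreement (x (s + t) - transitionMatrix A s t • x s) ≤
      ∑ r ∈ range t, c r * disagreement
        (x (s + (t - 1 - r) + 1) - A (s + (t - 1 - r) + 1) • x (s + (t - 1 - r))) := by
  induction t generalizing s with
  | zero =>
    simp [transitionMatrix, disagreement_le]
  | succ t ih =>
    have hsplit : x (s + (t + 1)) - transitionMatrix A s (t + 1) • x s =
        (x (s + 1 + t) - transitionMatrix A (s + 1) t • x (s + 1)) +
          transitionMatrix A (s + 1) t • (x (s + 1) - A (s + 1) • x s) := by
      rw [add_comm t 1, transitionMatrix_add, transitionMatrix_one, mul_smul, smul_sub, ← add_assoc]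
      abel
    rw [hsplit, sum_range_succ]
    refine (disagreement_add_le _ _).trans (add_le_add ((ih (s + 1)).trans_eq ?_) ?_)
    · refine sum_congr rfl fun r hr => ?_
      have hr := mem_range.1 hr
      rw [show s + 1 + (t - 1 - r) = s + (t + 1 - 1 - r) by omega]
    · simpa only [Nat.add_sub_cancel, Nat.sub_self, add_zero] using
        hc (s + 1) t (x (s + 1) - A (s + 1) • x s)

lemma disagreement_le_convolution {c : ℕ → ℝ}
    (hc : ∀ s t (z : ι → E), disagreement (transitionMatrix A s t • z) ≤ c t * disagreement z)
    (x : ℕ → ι → E) (k : ℕ) :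
    disagreement (x k) ≤ c k * disagreement (x 0) +
      ∑ r ∈ range k, c r * disagreement (x (k - 1 - r + 1) - A (k - 1 - r + 1) • x (k - 1 - r)) :=
  calc disagreement (x k)
      = disagreement (transitionMatrix A 0 k • x 0 + (x k - transitionMatrix A 0 k • x 0)) := by
        rw [add_sub_cancel]
    _ ≤ _ := (disagreement_add_le _ _).trans <| add_le_add (hc 0 k (x 0)) <| by
        simpa only [zero_add] using disagreement_sub_transitionMatrix_smul_le hc x 0 k

lemma exists_summable_disagreement_rate [Nonempty ι] (hA : ∀ k, A k ∈ rowStochastic ℝ ι) {η : ℝ}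
    (hη : 0 < η) (hAη : ∀ k i j, 0 < A k i j → η ≤ A k i j) (hdiag : ∀ k i, 0 < A k i i) {Q : ℕ}
    (hQ : 0 < Q) (hconn : ∀ k i j, Relation.ReflTransGen (CommunicatesWithin A Q k) i j) :
    ∃ c : ℕ → ℝ, Summable c ∧ (∀ t, 0 ≤ c t) ∧
      ∀ s t (z : ι → E), disagreement (transitionMatrix A s t • z) ≤ c t * disagreement z := by
  let i := Classical.arbitrary ι
  have hA0 : ∀ k i j, 0 ≤ A k i j := fun k _ _ => nonneg_of_mem_rowStochastic (hA k)
  set B := Fintype.card ι * Q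
  have hδ : ∀ s i j, η ^ B ≤ transitionMatrix A s B i j := fun s i j =>
    pow_le_transitionMatrix_of_pos hA0 hη.le hAη s B
      (transitionMatrix_card_mul_pos hA0 hdiag hconn s i j)
  have hδ1 : η ^ B ≤ 1 :=
    (hδ 0 i i).trans (le_one_of_mem_rowStochastic (transitionMatrix_mem_rowStochastic hA 0 B))
  refine ⟨fun t => (1 - η ^ B) ^ (t / B), ?_, fun t => pow_nonneg (sub_nonneg.2 hδ1) _,
    disagreement_transitionMatrix_smul_le hA hδ1 hδ⟩
  exact summable_pow_div (sub_nonneg.2 hδ1) (sub_lt_self 1 (pow_pos hη B))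
    (Nat.mul_pos Fintype.card_pos hQ)

end PerturbedConsensus

section ProjectedStep

variable {E : Type*} [SeminormedAddCommGroup E] {X : Set E} {P : E → E}

lemma norm_proj_sub_sub_le (hP : ∀ z, ∀ x ∈ X, ‖z - P z‖ ≤ ‖z - x‖) {x : E} (hx : x ∈ X) (d : E) :
    ‖P (x - d) - x‖ ≤ 2 * ‖d‖ :=
  calc ‖P (x - d) - x‖ ≤ ‖P (x - d) - (x - d)‖ + ‖x - d - x‖ :=
        norm_sub_le_norm_sub_add_norm_sub _ _ _
    _ ≤ ‖x - d - x‖ + ‖x - d - x‖ :=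
        add_le_add_left ((norm_sub_rev _ _).trans_le (hP (x - d) x hx)) _
    _ = 2 * ‖d‖ := by rw [sub_sub_cancel_left, norm_neg, two_mul]

lemma norm_proj_subgradient_step_sub_le [NormedSpace ℝ E]
    (hP : ∀ z, ∀ x ∈ X, ‖z - P z‖ ≤ ‖z - x‖) {x : E} (hx : x ∈ X) (α : ℝ) {g e : E} {C : ℝ}
    (hg : ‖g‖ ≤ C) : ‖P (x - α • (g + e)) - x‖ ≤ 2 * |α| * (C + ‖e‖) :=
  calc ‖P (x - α • (g + e)) - x‖ ≤ 2 * ‖α • (g + e)‖ := norm_proj_sub_sub_le hP hx _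
    _ = 2 * |α| * ‖g + e‖ := by rw [norm_smul, Real.norm_eq_abs, mul_assoc]
    _ ≤ 2 * |α| * (C + ‖e‖) := by
        gcongr
        exact (norm_add_le g e).trans (add_le_add_left hg _)

end ProjectedStep

section Moments

variable {Ω : Type*} [MeasurableSpace Ω] {μ : Measure Ω}

lemma integrable_norm_of_integrable_norm_sq [IsFiniteMeasure μ] {E : Type*} [NormedAddCommGroup E]
    {f : Ω → E} (hf : AEStronglyMeasurable f μ) (hf2 : Integrable (fun ω => ‖f ω‖ ^ 2) μ) :
    Integrable (fun ω => ‖f ω‖) μ :=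
  (((memLp_two_iff_integrable_sq_norm hf).2 hf2).integrable one_le_two).norm

lemma integral_le_one_add_integral_sq [IsProbabilityMeasure μ] {f : Ω → ℝ} (hf : Integrable f μ)
    (hf2 : Integrable (fun ω => f ω ^ 2) μ) : ∫ ω, f ω ∂μ ≤ 1 + ∫ ω, f ω ^ 2 ∂μ :=
  calc ∫ ω, f ω ∂μ ≤ ∫ ω, (1 + f ω ^ 2) ∂μ :=
        integral_mono hf ((integrable_const 1).add hf2) fun ω => by
          nlinarith [sq_nonneg (f ω - 1), sq_nonneg (f ω)]
    _ = 1 + ∫ ω, f ω ^ 2 ∂μ := by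
        rw [integral_add (integrable_const 1) hf2, integral_const, probReal_univ, one_smul]

lemma tendsto_integral_mul_sum_const_add [IsFiniteMeasure μ] {ι : Type*} [Fintype ι]
    {β : ℕ → ℝ} (hβ0 : ∀ k, 0 ≤ β k) (hβ : Tendsto β atTop (nhds 0)) {C ν : ι → ℝ}
    (hC : ∀ i, 0 ≤ C i) {h : ι → ℕ → Ω → ℝ} (hh0 : ∀ i k ω, 0 ≤ h i k ω)
    (hh : ∀ i k, Integrable (h i k) μ) (hν : ∀ i k, ∫ ω, h i k ω ∂μ ≤ ν i) :
    Tendsto (fun k => ∫ ω, β k * ∑ i, (C i + h i k ω) ∂μ) atTop (nhds 0) := by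
  have hCh : ∀ i k, Integrable (fun ω => C i + h i k ω) μ := fun i k =>
    (integrable_const _).add (hh i k)
  have hle : ∀ k, ∫ ω, β k * ∑ i, (C i + h i k ω) ∂μ ≤
      β k * ∑ i, (μ.real Set.univ * C i + ν i) := fun k => by
    rw [integral_const_mul, integral_finsetSum _ fun i _ => hCh i k]
    refine mul_le_mul_of_nonneg_left (sum_le_sum fun i _ => ?_) (hβ0 k)
    rw [integral_add (integrable_const _) (hh i k), integral_const, smul_eq_mul]
    exact add_le_add_right (hν i k) _
  refine squeeze_zero (fun k => integral_nonneg fun ω => mul_nonneg (hβ0 k) ?_) hle ?_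
  · exact sum_nonneg fun i _ => add_nonneg (hC i) (hh0 i k ω)
  · simpa only [zero_mul] using hβ.mul_const (∑ i, (μ.real Set.univ * C i + ν i))

end Moments

section Consensus

variable {ι Ω E : Type*} [Fintype ι] [MeasurableSpace Ω] {μ : Measure Ω} [SeminormedAddCommGroup E]
  [NormedSpace ℝ E]

open Matrix in
open scoped Matrix.Module in
/- `w` need not be measurable, so `∫ disagreement (w · k ω)` could be a junk value that controls
nothing; `f` is therefore dominated pointwise rather than in mean. -/
lemma tendsto_integral_of_le_disagreement [DecidableEq ι] [Nonempty ι] {A : ℕ → Matrix ι ι ℝ}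
    (hA : ∀ k, A k ∈ rowStochastic ℝ ι) {η : ℝ} (hη : 0 < η)
    (hAη : ∀ k i j, 0 < A k i j → η ≤ A k i j) (hdiag : ∀ k i, 0 < A k i i) {Q : ℕ} (hQ : 0 < Q)
    (hconn : ∀ k i j, Relation.ReflTransGen (CommunicatesWithin A Q k) i j)
    {w : ι → ℕ → Ω → E} (hw0 : ∀ i, Integrable (fun ω => ‖w i 0 ω‖) μ)
    {b : ℕ → Ω → ℝ} (hb : ∀ k, Integrable (b k) μ)
    (hblim : Tendsto (fun k => ∫ ω, b k ω ∂μ) atTop (nhds 0))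
    (hwb : ∀ i k ω, ‖w i (k + 1) ω - ∑ j, A (k + 1) i j • w j k ω‖ ≤ b k ω)
    {f : ℕ → Ω → ℝ} (hf0 : ∀ k ω, 0 ≤ f k ω) (hf : ∀ k ω, f k ω ≤ disagreement (w · k ω)) :
    Tendsto (fun k => ∫ ω, f k ω ∂μ) atTop (nhds 0) := by
  obtain ⟨c, hcsum, hc0, hc⟩ :=
    exists_summable_disagreement_rate (E := E) hA hη hAη hdiag hQ hconn
  refine tendsto_integral_of_le_convolution hcsum
    ((integrable_finsetSum univ fun i _ => hw0 i).const_mul 2) (fun k => (hb k).const_mul 2)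
    (by simpa only [integral_const_mul, mul_zero] using hblim.const_mul 2) hf0 fun k ω => ?_
  have hinit : disagreement (w · 0 ω) ≤ 2 * ∑ i, ‖w i 0 ω‖ :=
    disagreement_le_two_mul (sum_nonneg fun i _ => norm_nonneg _) fun i =>
      single_le_sum (f := fun i => ‖w i 0 ω‖) (fun _ _ => norm_nonneg _) (mem_univ i)
  have hpert : ∀ l, disagreement ((w · (l + 1) ω) - A (l + 1) • (w · l ω)) ≤ 2 * b l ω := fun l =>
    disagreement_le_two_mul ((norm_nonneg _).trans (hwb (Classical.arbitrary ι) l ω))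
      fun i => hwb i l ω
  refine ((hf k ω).trans (disagreement_le_convolution hc (fun l i => w i l ω) k)).trans ?_
  exact add_le_add (mul_le_mul_of_nonneg_left hinit (hc0 k))
    (sum_le_sum fun r _ => mul_le_mul_of_nonneg_left (hpert _) (hc0 r))

open Matrix in
theorem consensus_in_mean_general [DecidableEq ι] [IsFiniteMeasure μ] {X : Set E} (hX : Convex ℝ X)
    {P : E → E} (hPmem : ∀ z, P z ∈ X) (hPdist : ∀ z, ∀ x ∈ X, ‖z - P z‖ ≤ ‖z - x‖)
    {g : ι → E → E} {C : ι → ℝ} (hC : ∀ i, ∀ x ∈ X, ‖g i x‖ ≤ C i)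
    {A : ℕ → Matrix ι ι ℝ} (hA : ∀ k, A k ∈ rowStochastic ℝ ι) {η : ℝ} (hη : 0 < η)
    (hAη : ∀ k i j, 0 < A k i j → η ≤ A k i j) (hdiag : ∀ k i, 0 < A k i i) {Q : ℕ} (hQ : 0 < Q)
    (hconn : ∀ k i j, Relation.ReflTransGen (CommunicatesWithin A Q k) i j)
    {α : ℕ → ℝ} (hα : Tendsto α atTop (nhds 0)) {ε : ι → ℕ → Ω → E} {ν : ι → ℝ}
    (hε : ∀ i k, Integrable (fun ω => ‖ε i (k + 1) ω‖) μ)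
    (hν : ∀ i k, ∫ ω, ‖ε i (k + 1) ω‖ ∂μ ≤ ν i) {w v : ι → ℕ → Ω → E}
    (hw0 : ∀ i, Integrable (fun ω => ‖w i 0 ω‖) μ) (hw0X : ∀ i ω, w i 0 ω ∈ X)
    (hv : ∀ i k ω, v i k ω = ∑ j, A (k + 1) i j • w j k ω)
    (hw : ∀ i k ω,
      w i (k + 1) ω = P (v i k ω - α (k + 1) • (g i (v i k ω) + ε i (k + 1) ω)))
    {y : ℕ → Ω → E} (hy : ∀ k ω, y k ω ∈ convexHull ℝ (Set.range (w · k ω))) (j : ι) :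
    Tendsto (fun k => ∫ ω, ‖w j k ω - y k ω‖ ∂μ) atTop (nhds 0) := by
  have : Nonempty ι := ⟨j⟩
  have hwX : ∀ i k ω, w i k ω ∈ X
    | i, 0, ω => hw0X i ω
    | i, k + 1, ω => hw i k ω ▸ hPmem _
  have hvX : ∀ i k ω, v i k ω ∈ X := fun i k ω => hv i k ω ▸
    hX.sum_mem (fun _ _ => nonneg_of_mem_rowStochastic (hA _))
      (sum_row_of_mem_rowStochastic (hA _) i) fun l _ => hwX l k ω
  have hC0 : ∀ i, 0 ≤ C i := fun i => (norm_nonneg _).trans (hC i (P 0) (hPmem 0))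
  let b : ℕ → Ω → ℝ := fun k ω => 2 * |α (k + 1)| * ∑ i, (C i + ‖ε i (k + 1) ω‖)
  have hb : ∀ k, Integrable (b k) μ := fun k =>
    (integrable_finsetSum _ fun i _ => (integrable_const _).add (hε i k)).const_mul _
  have hstep : Tendsto (fun k => 2 * |α (k + 1)|) atTop (nhds 0) := by
    simpa only [abs_zero, mul_zero] using ((tendsto_add_atTop_iff_nat 1).2 hα).abs.const_mul 2
  have hblim : Tendsto (fun k => ∫ ω, b k ω ∂μ) atTop (nhds 0) :=
    tendsto_integral_mul_sum_const_add (fun k => by positivity) hstep hC0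
      (fun _ _ _ => norm_nonneg _) hε hν
  have hwb : ∀ i k ω, ‖w i (k + 1) ω - ∑ j, A (k + 1) i j • w j k ω‖ ≤ b k ω := fun i k ω => by
    rw [← hv, hw]
    refine (norm_proj_subgradient_step_sub_le hPdist (hvX i k ω) _ (hC i _ (hvX i k ω))).trans ?_
    exact mul_le_mul_of_nonneg_left (single_le_sum (f := fun i => C i + ‖ε i (k + 1) ω‖)
      (fun i _ => add_nonneg (hC0 i) (norm_nonneg _)) (mem_univ i)) (by positivity)
  refine tendsto_integral_of_le_disagreement hA hη hAη hdiag hQ hconn hw0 hb hblim hwb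
    (fun _ _ => norm_nonneg _) fun k ω => ?_
  rw [← dist_eq_norm]
  exact dist_le_disagreement_of_mem_convexHull
    (subset_convexHull ℝ _ (Set.mem_range_self j)) (hy k ω)

end Consensus

lemma inv_card_smul_sum_mem_convexHull {ι E : Type*} [Fintype ι] [Nonempty ι] [AddCommGroup E]
    [Module ℝ E] (x : ι → E) :
    (Fintype.card ι : ℝ)⁻¹ • ∑ i, x i ∈ convexHull ℝ (Set.range x) := by
  rw [smul_sum]
  refine (convex_convexHull ℝ _).sum_mem (fun _ _ => by positivity) ?_
    fun i _ => subset_convexHull ℝ _ (Set.mem_range_self i)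
  rw [sum_const, card_univ, nsmul_eq_mul, mul_inv_cancel₀ (Nat.cast_ne_zero.2 Fintype.card_ne_zero)]

/-- Corollary 5.2 (consensus in mean): under the closed convexity, connectivity and doubly
stochastic weight assumptions, uniform subgradient bounds `‖∇f_i(x)‖ ≤ C_i` on `X`, and
uniformly bounded second moments `E[‖ε_{i,k+1}‖²] ≤ ν̄_i²`, if the stepsizes satisfy
`α_k → 0`, then `lim_k E[‖w_{j,k} − y_k‖] = 0` for every agent `j`. -/
theorem consensus_in_mean {n m Q : ℕ} (hm : 0 < m) (hQ : 1 ≤ Q)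
    {Ω : Type*} [MeasurableSpace Ω] (μ : Measure Ω) [IsProbabilityMeasure μ]
    (X : Set (EuclideanSpace ℝ (Fin n))) (hXne : X.Nonempty)
    (hXcl : IsClosed X) (hXcv : Convex ℝ X)
    -- Euclidean projection onto X
    (P : EuclideanSpace ℝ (Fin n) → EuclideanSpace ℝ (Fin n))
    (hPmem : ∀ z, P z ∈ X)
    (hPdist : ∀ z, ∀ x ∈ X, ‖z - P z‖ ≤ ‖z - x‖)
    -- subgradients, uniformly bounded over X
    (g : Fin m → EuclideanSpace ℝ (Fin n) → EuclideanSpace ℝ (Fin n))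
    (C : Fin m → ℝ) (hC : ∀ i, ∀ x ∈ X, ‖g i x‖ ≤ C i)
    -- weights: doubly stochastic, uniformly positive entries
    (a : ℕ → Fin m → Fin m → ℝ)
    (hann : ∀ k i j, 0 ≤ a k i j)
    (harow : ∀ k i, ∑ j, a k i j = 1)
    (hacol : ∀ k j, ∑ i, a k i j = 1)
    (η : ℝ) (hη0 : 0 < η) (hη1 : η < 1)
    (haη : ∀ k i j, 0 < a k i j → η ≤ a k i j)
    (haself : ∀ k i, η ≤ a k i i)
    -- Q-step strong connectivity
    (hconn : ∀ k : ℕ, ∀ i j : Fin m,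
      Relation.ReflTransGen (fun u u' => ∃ l, 1 ≤ l ∧ l ≤ Q ∧ 0 < a (k + l) u' u) i j)
    -- stepsizes converging to α₀ ≥ 0
    (α : ℕ → ℝ) (hα : ∀ k, 0 < α k)
    (hαlim : Tendsto α atTop (nhds 0))
    -- stochastic errors with uniformly bounded second moments
    (ε : Fin m → ℕ → Ω → EuclideanSpace ℝ (Fin n))
    (hεmeas : ∀ i k, Measurable (ε i k))
    (ν : Fin m → ℝ)
    (hεint : ∀ i k, Integrable (fun ω => ‖ε i (k + 1) ω‖ ^ 2) μ)
    (hν : ∀ i k, ∫ ω, ‖ε i (k + 1) ω‖ ^ 2 ∂μ ≤ ν i ^ 2)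
    -- the algorithm (pathwise), with deterministic initial points in X
    (w v : Fin m → ℕ → Ω → EuclideanSpace ℝ (Fin n))
    (w₀ : Fin m → EuclideanSpace ℝ (Fin n))
    (hw0 : ∀ i ω, w i 0 ω = w₀ i) (hw0X : ∀ i, w₀ i ∈ X)
    (hv : ∀ i k ω, v i k ω = ∑ j, a (k + 1) i j • w j k ω)
    (hw : ∀ i k ω,
      w i (k + 1) ω = P (v i k ω - α (k + 1) • (g i (v i k ω) + ε i (k + 1) ω)))
    (y : ℕ → Ω → EuclideanSpace ℝ (Fin n))
    (hy : ∀ k ω, y k ω = (m : ℝ)⁻¹ • ∑ i, w i k ω) :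
    ∀ j : Fin m,
      Tendsto (fun k => ∫ ω, ‖w j k ω - y k ω‖ ∂μ) atTop (nhds 0) := by
  have : NeZero m := ⟨hm.ne'⟩
  have hε : ∀ i k, Integrable (fun ω => ‖ε i (k + 1) ω‖) μ := fun i k =>
    integrable_norm_of_integrable_norm_sq (hεmeas i (k + 1)).aestronglyMeasurable (hεint i k)
  refine consensus_in_mean_general hXcv hPmem hPdist hC (A := fun k => Matrix.of (a k))
    (fun k => Matrix.mem_rowStochastic_iff_sum.2 ⟨hann k, harow k⟩) hη0 haη
    (fun k i => hη0.trans_le (haself k i)) hQ hconn hαlim hε (ν := fun i => 1 + ν i ^ 2)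
    (fun i k => ?_) (fun i => ?_) (fun i ω => hw0 i ω ▸ hw0X i) hv hw fun k ω => ?_
  · exact (integral_le_one_add_integral_sq (hε i k) (hεint i k)).trans
      (add_le_add_right (hν i k) 1)
  · simpa only [hw0] using integrable_const ‖w₀ i‖
  · simpa only [hy, Fintype.card_fin] using inv_card_smul_sum_mem_convexHull fun i => w i k ω
end
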